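/- (Spanning by noncrossing symbols.) Let V = ℂ². For an m-partite pair partition π of [md], define the function ω̃_π : (V*)^m → ℂ by ω̃_π(y₁, ..., y_m) = Π_{{i,j} ∈ π, i<j} [y_{c(i)}, y_{c(j)}], where c(i) ∈ {1,...,m} is the index of the interval of length d containing i, and [·,·] is the determinant bracket on V* ≅ ℂ². Then for every m-partite pair partition π of [md], the function ω̃_π lies in the linear span of { ω̃_σ : σ an m-partite noncrossing pair partition of [md] }. -/

import Mathlib

/-!
The symbols are shown to lie in the span for *every* pair partition, `m`-partite or not: a pair
inside one interval contributes a factor `[v, v] = 0`, so a symbol that is not `m`-partite vanishes.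

Suppose the pairing has a crossing `a < b < c < e` with pairs `{a, c}`, `{b, e}`. The Plücker
relation writes its symbol as the sum of the symbols of the two pairings obtained by replacing
these pairs with `{a, b}, {c, e}`, respectively `{a, e}, {b, c}` (`symbolFun_eq_add`).
Both are conjugates of the pairing by a transposition. The process terminates because the weight
`∑ i, |i - σ i| (N - |i - σ i|)` strictly decreases: with gaps `x = b - a`, `y = c - b`, `z = e - c`
and `f t = t (N - t)`, one has
`f (x + y) + f (y + z) - f x - f z = 2 y (N - x - y - z) > 0` and
`f (x + y) + f (y + z) - f (x + y + z) - f y = 2 x z > 0`.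
-/

/-- The bracket `[v, w]` of two vectors in `ℂ²`: the determinant of the `2 × 2`
matrix with columns `v` and `w`. -/
def bracket (v w : Fin 2 → ℂ) : ℂ := v 0 * w 1 - v 1 * w 0

/-- The index `c(i) ∈ {1, ..., m}` (0-indexed) of the length-`d` interval containing
`i ∈ {1, ..., md}` (0-indexed, so `c(i) = i / d`). -/
def intervalIdx (m d : ℕ) (i : Fin (m * d)) : Fin m :=
  ⟨(i : ℕ) / d, by
    rcases Nat.eq_zero_or_pos d with h | h
    · subst h; exact absurd i.2 (by simp)
    · exact (Nat.div_lt_iff_lt_mul h).mpr i.2⟩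

/-- A pair partition of `{1, ..., N}`, encoded as a fixed-point-free involution: the
blocks are the pairs `{i, σ i}`. -/
def IsPairing {N : ℕ} (σ : Equiv.Perm (Fin N)) : Prop :=
  σ * σ = 1 ∧ ∀ i, σ i ≠ i

/-- The pair partition encoded by `σ` is noncrossing: there are no
`i < i' < j < j'` with `{i, j}` and `{i', j'}` blocks. -/
def PairingNoncrossing {N : ℕ} (σ : Equiv.Perm (Fin N)) : Prop :=
  ∀ i i' : Fin N, i < i' → i' < σ i → ¬ (σ i < σ i')

/-- The pair partition encoded by `σ` is `m`-partite with respect to the consecutive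
intervals of length `d`: each block contains at most one element of each interval,
i.e. the two elements of any pair lie in different intervals. -/
def PairingMPartite (m d : ℕ) (σ : Equiv.Perm (Fin (m * d))) : Prop :=
  ∀ i, intervalIdx m d (σ i) ≠ intervalIdx m d i

/-- The symbol `ω̃_π : (V*)^m → ℂ` of the pair partition `π` (encoded by the
involution `σ`): `ω̃_π(y₁, ..., y_m) = Π_{{i,j} ∈ π, i<j} [y_{c(i)}, y_{c(j)}]`. -/
noncomputable def symbolFun (m d : ℕ) (σ : Equiv.Perm (Fin (m * d)))
    (y : Fin m → Fin 2 → ℂ) : ℂ :=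
  ∏ i ∈ Finset.univ.filter (fun i : Fin (m * d) => i < σ i),
    bracket (y (intervalIdx m d i)) (y (intervalIdx m d (σ i)))

/-- The weight of a chord `{i, j}` of `N` points on a circle, `|i - j| (N - |i - j|)`. -/
def chordWeight {N : ℕ} (i j : Fin N) : ℤ :=
  |(i : ℤ) - j| * (N - |(i : ℤ) - j|)

/-- The total weight of a pairing, each pair being counted twice. It strictly decreases
when a crossing is resolved. -/
def pairingWeight {N : ℕ} (σ : Equiv.Perm (Fin N)) : ℤ :=
  ∑ i, chordWeight i (σ i)

lemma chordWeight_nonneg {N : ℕ} (i j : Fin N) : 0 ≤ chordWeight i j := by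
  unfold chordWeight
  have hi := i.2
  have hj := j.2
  apply mul_nonneg (abs_nonneg _)
  rw [sub_nonneg, abs_le]
  constructor <;> omega

lemma pairingWeight_nonneg {N : ℕ} (σ : Equiv.Perm (Fin N)) : 0 ≤ pairingWeight σ :=
  Finset.sum_nonneg fun i _ => chordWeight_nonneg i (σ i)

lemma chordWeight_comm {N : ℕ} (i j : Fin N) : chordWeight i j = chordWeight j i := by
  unfold chordWeight
  rw [abs_sub_comm]

lemma chordWeight_of_lt {N : ℕ} {i j : Fin N} (h : i < j) :
    chordWeight i j = ((j : ℤ) - i) * (N - ((j : ℤ) - i)) := by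
  unfold chordWeight
  have h' : (i : ℕ) < j := h
  rw [abs_sub_comm, abs_of_nonneg (by omega)]

lemma IsPairing.apply_apply {N : ℕ} {σ : Equiv.Perm (Fin N)} (h : IsPairing σ) (i : Fin N) :
    σ (σ i) = i := by
  simpa using congrArg (fun τ : Equiv.Perm (Fin N) => τ i) h.1

lemma IsPairing.conj_swap {N : ℕ} {σ : Equiv.Perm (Fin N)} (h : IsPairing σ) (p q : Fin N) :
    IsPairing (Equiv.swap p q * σ * Equiv.swap p q) := by
  constructor
  · ext i
    simp [h.apply_apply]
  · intro i hi
    apply h.2 (Equiv.swap p q i)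
    apply (Equiv.swap p q).injective
    simpa using hi

/-- Isolating four distinct points in a product over a finite type. -/
lemma prod_eq_four_mul {ι M : Type*} [Fintype ι] [DecidableEq ι] [CommMonoid M] (f : ι → M)
    {a b c e : ι} (hab : a ≠ b) (hac : a ≠ c) (hae : a ≠ e) (hbc : b ≠ c) (hbe : b ≠ e)
    (hce : c ≠ e) :
    ∏ i, f i = (f a * (f b * (f c * f e))) * ∏ i ∈ ({a, b, c, e} : Finset ι)ᶜ, f i := by
  rw [← Finset.prod_mul_prod_compl ({a, b, c, e} : Finset ι) f]
  congr 1
  rw [Finset.prod_insert (by simp [*]), Finset.prod_insert (by simp [*]),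
    Finset.prod_insert (by simp [*]), Finset.prod_singleton]

/-- Additive form of `prod_eq_four_mul`. -/
lemma sum_eq_four_add {ι M : Type*} [Fintype ι] [DecidableEq ι] [AddCommMonoid M] (f : ι → M)
    {a b c e : ι} (hab : a ≠ b) (hac : a ≠ c) (hae : a ≠ e) (hbc : b ≠ c) (hbe : b ≠ e)
    (hce : c ≠ e) :
    ∑ i, f i = (f a + (f b + (f c + f e))) + ∑ i ∈ ({a, b, c, e} : Finset ι)ᶜ, f i :=
  prod_eq_four_mul (M := Multiplicative M) f hab hac hae hbc hbe hce

lemma bracket_self (v : Fin 2 → ℂ) : bracket v v = 0 := by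
  unfold bracket
  ring

lemma bracket_pluecker (v₁ v₂ v₃ v₄ : Fin 2 → ℂ) :
    bracket v₁ v₃ * bracket v₂ v₄ =
      bracket v₁ v₂ * bracket v₃ v₄ + bracket v₁ v₄ * bracket v₂ v₃ := by
  unfold bracket
  ring

lemma symbolFun_eq_zero {m d : ℕ} {σ : Equiv.Perm (Fin (m * d))} (hσ : IsPairing σ)
    (h : ¬ PairingMPartite m d σ) : symbolFun m d σ = 0 := by
  unfold PairingMPartite at h
  push Not at h
  obtain ⟨i, hi⟩ := h
  ext y
  unfold symbolFun
  rcases lt_or_gt_of_ne (hσ.2 i) with hlt | hlt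
  · apply Finset.prod_eq_zero (i := σ i)
    · simpa [hσ.apply_apply] using hlt
    · rw [hσ.apply_apply, hi, bracket_self]
  · apply Finset.prod_eq_zero (i := i)
    · simpa using hlt
    · rw [hi, bracket_self]

section Crossing

variable {N : ℕ} {σ : Equiv.Perm (Fin N)} {a b c e : Fin N}

/-- Conjugating by `swap b c` turns the crossing pairs `{a, c}, {b, e}` into `{a, b}, {c, e}`. -/
lemma conj_swap_inner (hσ : IsPairing σ) (hab : a < b) (hbc : b < c) (hce : c < e)
    (hac : σ a = c) (hbe : σ b = e) :
    let τ := Equiv.swap b c * σ * Equiv.swap b c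
    τ a = b ∧ τ b = a ∧ τ c = e ∧ τ e = c ∧
      ∀ i ∈ ({a, b, c, e} : Finset (Fin N))ᶜ, τ i = σ i := by
  have hca : σ c = a := by rw [← hac, hσ.apply_apply]
  have heb : σ e = b := by rw [← hbe, hσ.apply_apply]
  have h1 := hab.ne
  have h2 := hbc.ne
  have h3 := hce.ne
  have h4 := (hab.trans hbc).ne
  have h5 := (hbc.trans hce).ne
  refine ⟨?_, ?_, ?_, ?_, ?_⟩
  · simp [Equiv.swap_apply_of_ne_of_ne h1 h4, hac]
  · simp [Equiv.swap_apply_of_ne_of_ne h1 h4, hca]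
  · simp [Equiv.swap_apply_of_ne_of_ne h5.symm h3.symm, hbe]
  · simp [Equiv.swap_apply_of_ne_of_ne h5.symm h3.symm, heb]
  · intro i hi
    simp only [Finset.mem_compl, Finset.mem_insert, Finset.mem_singleton, not_or] at hi
    obtain ⟨ia, ib, ic, ie⟩ := hi
    have k1 : σ i ≠ b := fun h => ie (by rw [← hσ.apply_apply i, h, hbe])
    have k2 : σ i ≠ c := fun h => ia (by rw [← hσ.apply_apply i, h, hca])
    simp [Equiv.swap_apply_of_ne_of_ne ib ic, Equiv.swap_apply_of_ne_of_ne k1 k2]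

/-- Conjugating by `swap c e` turns the crossing pairs `{a, c}, {b, e}` into `{a, e}, {b, c}`. -/
lemma conj_swap_outer (hσ : IsPairing σ) (hab : a < b) (hbc : b < c) (hce : c < e)
    (hac : σ a = c) (hbe : σ b = e) :
    let τ := Equiv.swap c e * σ * Equiv.swap c e
    τ a = e ∧ τ b = c ∧ τ c = b ∧ τ e = a ∧
      ∀ i ∈ ({a, b, c, e} : Finset (Fin N))ᶜ, τ i = σ i := by
  have hca : σ c = a := by rw [← hac, hσ.apply_apply]
  have heb : σ e = b := by rw [← hbe, hσ.apply_apply]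
  have h2 := hbc.ne
  have h4 := (hab.trans hbc).ne
  have h5 := (hbc.trans hce).ne
  have h6 := (hab.trans (hbc.trans hce)).ne
  refine ⟨?_, ?_, ?_, ?_, ?_⟩
  · simp [Equiv.swap_apply_of_ne_of_ne h4 h6, hac]
  · simp [Equiv.swap_apply_of_ne_of_ne h2 h5, hbe]
  · simp [Equiv.swap_apply_of_ne_of_ne h2 h5, heb]
  · simp [Equiv.swap_apply_of_ne_of_ne h4 h6, hca]
  · intro i hi
    simp only [Finset.mem_compl, Finset.mem_insert, Finset.mem_singleton, not_or] at hi
    obtain ⟨ia, ib, ic, ie⟩ := hi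
    have k1 : σ i ≠ c := fun h => ia (by rw [← hσ.apply_apply i, h, hca])
    have k2 : σ i ≠ e := fun h => ib (by rw [← hσ.apply_apply i, h, heb])
    simp [Equiv.swap_apply_of_ne_of_ne ic ie, Equiv.swap_apply_of_ne_of_ne k1 k2]

lemma pairingWeight_conj_swap_inner_lt (hσ : IsPairing σ) (hab : a < b) (hbc : b < c)
    (hce : c < e) (hac : σ a = c) (hbe : σ b = e) :
    pairingWeight (Equiv.swap b c * σ * Equiv.swap b c) < pairingWeight σ := by
  have hca : σ c = a := by rw [← hac, hσ.apply_apply]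
  have heb : σ e = b := by rw [← hbe, hσ.apply_apply]
  obtain ⟨ta, tb, tc, te, tr⟩ := conj_swap_inner hσ hab hbc hce hac hbe
  have hac' := hab.trans hbc
  have hbe' := hbc.trans hce
  have hae' := hab.trans hbe'
  unfold pairingWeight
  rw [sum_eq_four_add _ hab.ne hac'.ne hae'.ne hbc.ne hbe'.ne hce.ne,
    sum_eq_four_add (fun i => chordWeight i (σ i)) hab.ne hac'.ne hae'.ne hbc.ne hbe'.ne hce.ne,
    Finset.sum_congr rfl fun i hi => by rw [tr i hi], ta, tb, tc, te, hac, hbe, hca, heb,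
    chordWeight_comm b a, chordWeight_comm e c, chordWeight_comm c a, chordWeight_comm e b,
    chordWeight_of_lt hab, chordWeight_of_lt hce, chordWeight_of_lt hac', chordWeight_of_lt hbe']
  have h2 : (0 : ℤ) < c - b := by have : (b : ℕ) < c := hbc; omega
  have h3 : (0 : ℤ) < N - (e - a) := by have := e.2; omega
  nlinarith [mul_pos h2 h3]

lemma pairingWeight_conj_swap_outer_lt (hσ : IsPairing σ) (hab : a < b) (hbc : b < c)
    (hce : c < e) (hac : σ a = c) (hbe : σ b = e) :
    pairingWeight (Equiv.swap c e * σ * Equiv.swap c e) < pairingWeight σ := by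
  have hca : σ c = a := by rw [← hac, hσ.apply_apply]
  have heb : σ e = b := by rw [← hbe, hσ.apply_apply]
  obtain ⟨ta, tb, tc, te, tr⟩ := conj_swap_outer hσ hab hbc hce hac hbe
  have hac' := hab.trans hbc
  have hbe' := hbc.trans hce
  have hae' := hab.trans hbe'
  unfold pairingWeight
  rw [sum_eq_four_add _ hab.ne hac'.ne hae'.ne hbc.ne hbe'.ne hce.ne,
    sum_eq_four_add (fun i => chordWeight i (σ i)) hab.ne hac'.ne hae'.ne hbc.ne hbe'.ne hce.ne,
    Finset.sum_congr rfl fun i hi => by rw [tr i hi], ta, tb, tc, te, hac, hbe, hca, heb,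
    chordWeight_comm c b, chordWeight_comm e a, chordWeight_comm c a, chordWeight_comm e b,
    chordWeight_of_lt hbc, chordWeight_of_lt hae', chordWeight_of_lt hac', chordWeight_of_lt hbe']
  have h2 : (0 : ℤ) < b - a := by have : (a : ℕ) < b := hab; omega
  have h3 : (0 : ℤ) < e - c := by have : (c : ℕ) < e := hce; omega
  nlinarith [mul_pos h2 h3]

end Crossing

/-- Resolving a crossing by the Plücker relation. -/
lemma symbolFun_eq_add {m d : ℕ} {σ : Equiv.Perm (Fin (m * d))} {a b c e : Fin (m * d)}
    (hσ : IsPairing σ) (hab : a < b) (hbc : b < c) (hce : c < e)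
    (hac : σ a = c) (hbe : σ b = e) :
    symbolFun m d σ = symbolFun m d (Equiv.swap b c * σ * Equiv.swap b c) +
      symbolFun m d (Equiv.swap c e * σ * Equiv.swap c e) := by
  have hca : σ c = a := by rw [← hac, hσ.apply_apply]
  have heb : σ e = b := by rw [← hbe, hσ.apply_apply]
  obtain ⟨ta, tb, tc, te, tr⟩ := conj_swap_inner hσ hab hbc hce hac hbe
  obtain ⟨ua, ub, uc, ue, ur⟩ := conj_swap_outer hσ hab hbc hce hac hbe
  have hac' := hab.trans hbc
  have hbe' := hbc.trans hce
  have hae' := hab.trans hbe'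
  ext y
  -- The filtered product as a product over all points, with factor `1` at right endpoints.
  let F : Fin (m * d) → Fin (m * d) → ℂ := fun i j =>
    if i < j then bracket (y (intervalIdx m d i)) (y (intervalIdx m d j)) else 1
  have hF : ∀ τ : Equiv.Perm (Fin (m * d)),
      (∀ i ∈ ({a, b, c, e} : Finset (Fin (m * d)))ᶜ, τ i = σ i) → symbolFun m d τ y =
      (F a (τ a) * (F b (τ b) * (F c (τ c) * F e (τ e)))) *
        ∏ i ∈ ({a, b, c, e} : Finset (Fin (m * d)))ᶜ, F i (σ i) := by
    intro τ hτ
    unfold symbolFun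
    rw [Finset.prod_filter, ← Finset.prod_congr rfl fun i hi => congrArg (F i) (hτ i hi)]
    exact prod_eq_four_mul (fun i => F i (τ i)) hab.ne hac'.ne hae'.ne hbc.ne hbe'.ne hce.ne
  rw [Pi.add_apply, hF σ fun _ _ => rfl, hF _ tr, hF _ ur,
    ta, tb, tc, te, ua, ub, uc, ue, hac, hbe, hca, heb, ← add_mul]
  congr 1
  simp only [F, hab, hbc, hce, hac', hbe', hae', hab.not_gt, hbc.not_gt, hce.not_gt,
    hac'.not_gt, hbe'.not_gt, hae'.not_gt, if_true, if_false, one_mul, mul_one]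
  exact bracket_pluecker _ _ _ _

/-- The spanning statement without the `m`-partite hypothesis, by induction on the weight. -/
lemma symbolFun_mem_span_of_isPairing (m d n : ℕ) :
    ∀ σ : Equiv.Perm (Fin (m * d)), IsPairing σ → (pairingWeight σ).toNat = n →
      symbolFun m d σ ∈ Submodule.span ℂ
        {f : (Fin m → Fin 2 → ℂ) → ℂ |
          ∃ τ : Equiv.Perm (Fin (m * d)),
            IsPairing τ ∧ PairingMPartite m d τ ∧ PairingNoncrossing τ ∧
              f = symbolFun m d τ} := by
  induction n using Nat.strong_induction_on with
  | _ n ih =>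
    intro σ hσ hn
    by_cases hm : PairingMPartite m d σ
    swap
    · rw [symbolFun_eq_zero hσ hm]
      exact Submodule.zero_mem _
    by_cases hc : PairingNoncrossing σ
    · exact Submodule.subset_span ⟨σ, hσ, hm, hc, rfl⟩
    unfold PairingNoncrossing at hc
    push Not at hc
    obtain ⟨a, b, hab, hbc, hce⟩ := hc
    rw [symbolFun_eq_add hσ hab hbc hce rfl rfl]
    have h1 := pairingWeight_conj_swap_inner_lt hσ hab hbc hce rfl rfl
    have h2 := pairingWeight_conj_swap_outer_lt hσ hab hbc hce rfl rfl
    have h1' := pairingWeight_nonneg (Equiv.swap b (σ a) * σ * Equiv.swap b (σ a))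
    have h2' := pairingWeight_nonneg (Equiv.swap (σ a) (σ b) * σ * Equiv.swap (σ a) (σ b))
    exact Submodule.add_mem _ (ih _ (by omega) _ (hσ.conj_swap _ _) rfl)
      (ih _ (by omega) _ (hσ.conj_swap _ _) rfl)

/-- **Spanning by noncrossing symbols.** For every `m`-partite pair partition `π` of
`{1, ..., md}`, the symbol `ω̃_π` lies in the linear span of the symbols `ω̃_σ` of the
`m`-partite *noncrossing* pair partitions of `{1, ..., md}`. -/
theorem symbol_mem_span_noncrossing (m d : ℕ) (hd : 1 ≤ d)
    (σ : Equiv.Perm (Fin (m * d))) (hσ : IsPairing σ ∧ PairingMPartite m d σ) :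
    symbolFun m d σ ∈ Submodule.span ℂ
      {f : (Fin m → Fin 2 → ℂ) → ℂ |
        ∃ τ : Equiv.Perm (Fin (m * d)),
          IsPairing τ ∧ PairingMPartite m d τ ∧ PairingNoncrossing τ ∧
            f = symbolFun m d τ} :=
  symbolFun_mem_span_of_isPairing m d _ σ hσ.1 rfl
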